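/- arXiv:math/0508153 — 2 statements merged into one kernel-verified Lean document; each statement's English description precedes it below -/
import Mathlib

section
/- For every integer n ≥ 2, the terminating well-poised hypergeometric sum satisfies Σ_{k=0}^{n−2} [(3/2)_k (7/4)_k (1/2)_k (2−n)_k (2+n)_k] / [(3/4)_k (2)_k (n+1/2)_k (1/2−n)_k k!] = n/2, where all terms are rational numbers. -/
/-- The rising factorial (Pochhammer symbol) `(a)_k = a(a+1)⋯(a+k-1)`, with `(a)_0 = 1`. -/
def poch (a : ℚ) (k : ℕ) : ℚ := ∏ j ∈ Finset.range k, (a + (j : ℚ))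

/-!
The sum is the case `a = 3/2`, `b = 1/2`, `d = n + 2`, `m = n - 2` of Dougall's terminating
very-well-poised `₅F₄` summation, whose four numerator parameters besides `1 + a/2` are
`a, b, -m, d`. Creative telescoping proves the latter: with `-m` replaced by a free parameter `c`,
a combination of the summands at `c - 1` and `c`, with coefficients independent of `k`, is a
difference in `k` of a rational multiple of the summand at `c`. At `c = -m` the boundary term
vanishes, and what remains is a first-order recurrence in `m` for the sum.
-/

local notation:max a:max "⁽" k "⁾" => Polynomial.eval a (ascPochhammer _ k)

theorem mul_ascPochhammer_eval_add_one {R : Type*} [CommSemiring R] (a : R) (k : ℕ) :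
    a * (a + 1)⁽k⁾ = a⁽k⁾ * (a + k) := by
  rw [← ascPochhammer_succ_eval, ascPochhammer_succ_left]
  simp

theorem ascPochhammer_eval_one_sub_sub_natCast {R : Type*} [Ring R] (a : R) (k : ℕ) :
    (1 - a - k)⁽k⁾ = (-1) ^ k * a⁽k⁾ := by
  rw [show 1 - a - k = -(a + k - 1) by abel, ascPochhammer_eval_neg_eq_descPochhammer,
    descPochhammer_eval_eq_ascPochhammer, show a + k - 1 - k + 1 = a by abel]

section WellPoised

variable {K : Type*} [Field K]

/-- The `k`-th term of the very-well-poised series `₅F₄(1)`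
with numerator parameters `a, 1 + a/2, b, c, d`
and denominator parameters `a/2, 1 + a - b, 1 + a - c, 1 + a - d`. -/
noncomputable def wellPoisedTerm (a b c d : K) (k : ℕ) : K :=
  (a⁽k⁾ * (1 + a / 2)⁽k⁾ * b⁽k⁾ * c⁽k⁾ * d⁽k⁾) /
    ((a / 2)⁽k⁾ * (1 + a - b)⁽k⁾ * (1 + a - c)⁽k⁾ * (1 + a - d)⁽k⁾ * (k.factorial : K))

@[simp]
theorem wellPoisedTerm_zero (a b c d : K) : wellPoisedTerm a b c d 0 = 1 := by
  simp [wellPoisedTerm]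

theorem wellPoisedTerm_succ (a b c d : K) (k : ℕ) :
    wellPoisedTerm a b c d (k + 1) = wellPoisedTerm a b c d k *
      (((a + k) * (1 + a / 2 + k) * (b + k) * (c + k) * (d + k)) /
        ((a / 2 + k) * (1 + a - b + k) * (1 + a - c + k) * (1 + a - d + k) * (k + 1))) := by
  simp only [wellPoisedTerm, ascPochhammer_succ_eval, Nat.factorial_succ, Nat.cast_mul,
    Nat.cast_succ, div_mul_div_comm]
  congr 1 <;> ring

theorem wellPoisedTerm_sub_one_succ {a c : K} (b d : K) (k : ℕ) (hac : 1 + a - c ≠ 0) :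
    wellPoisedTerm a b (c - 1) d (k + 1) = wellPoisedTerm a b c d k *
      (((a + k) * (1 + a / 2 + k) * (b + k) * (c - 1) * (d + k) * (1 + a - c)) /
        ((a / 2 + k) * (1 + a - b + k) * (1 + a - c + k) * (1 + a - c + (k + 1)) *
          (1 + a - d + k) * (k + 1))) := by
  have numerator_shift : (c - 1)⁽k + 1⁾ = (c - 1) * c⁽k⁾ := by
    rw [ascPochhammer_succ_eval, ← mul_ascPochhammer_eval_add_one, sub_add_cancel]
  have denominator_shift : (1 + a - (c - 1))⁽k + 1⁾ =
      (1 + a - c)⁽k⁾ * (1 + a - c + k) * (1 + a - c + (k + 1)) / (1 + a - c) := by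
    rw [eq_div_iff hac, mul_comm, show 1 + a - (c - 1) = 1 + a - c + 1 by ring,
      mul_ascPochhammer_eval_add_one, ascPochhammer_succ_eval, Nat.cast_succ]
  rw [wellPoisedTerm, numerator_shift, denominator_shift, wellPoisedTerm, div_mul_div_comm]
  simp only [ascPochhammer_succ_eval, Nat.factorial_succ, Nat.cast_mul, Nat.cast_succ,
    mul_div_assoc', div_mul_eq_mul_div, div_div_eq_mul_div]
  congr 1 <;> ring

theorem wellPoisedTerm_neg_natCast_of_lt (a b d : K) {m k : ℕ} (h : m < k) :
    wellPoisedTerm a b (-m) d k = 0 := by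
  simp [wellPoisedTerm, ascPochhammer_eval_neg_coe_nat_of_lt h]

variable [CharZero K]

theorem sum_wellPoisedTerm_contiguous {a b c d : K} (N : ℕ)
    (ha : ∀ j ≤ N, a + 2 * j ≠ 0) (hb : ∀ j < N, 1 + a - b + j ≠ 0)
    (hc : ∀ j ≤ N, 1 + a - c + j ≠ 0) (hd : ∀ j < N, 1 + a - d + j ≠ 0) :
    ∑ k ∈ Finset.range (N + 1),
        ((1 + a - b - c) * (1 + a - c - d) * wellPoisedTerm a b (c - 1) d k -
          (1 + a - c) * (1 + a - b - c - d) * wellPoisedTerm a b c d k) =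
      (1 + a - c) * ((a + N) * (b + N) * (d + N)) / ((a + 2 * N) * (1 + a - c + N)) *
        wellPoisedTerm a b c d N := by
  have hac : 1 + a - c ≠ 0 := by simpa using hc 0 N.zero_le
  induction N with
  | zero =>
    have ha0 : a ≠ 0 := by simpa using ha 0 le_rfl
    simp only [zero_add, Finset.sum_range_one, wellPoisedTerm_zero, Nat.cast_zero, add_zero,
      mul_zero, mul_one]
    field_simp
    ring
  | succ N ih =>
    have haN := ha (N + 1) le_rfl
    have hbN := hb N N.lt_succ_self
    have hcN := hc N N.le_succ
    have hcN' := hc (N + 1) le_rfl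
    have hdN := hd N N.lt_succ_self
    have hN : (N : K) + 1 ≠ 0 := N.cast_add_one_ne_zero
    rw [Finset.sum_range_succ, ih (fun j hj => ha j (by lia)) (fun j hj => hb j (by lia))
      (fun j hj => hc j (by lia)) (fun j hj => hd j (by lia)),
      wellPoisedTerm_sub_one_succ b d N hac, wellPoisedTerm_succ,
      show a / 2 + (N : K) = (a + 2 * N) / 2 by ring,
      show 1 + a / 2 + (N : K) = (a + 2 * (N + 1)) / 2 by ring]
    push_cast at haN hcN' ⊢
    generalize wellPoisedTerm a b c d N = t
    field_simp
    ring

theorem sum_wellPoisedTerm_neg_natCast_succ {a b d : K} (m : ℕ)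
    (ha : ∀ j ≤ 2 * (m + 1), a + j ≠ 0) (hb : ∀ j < m + 1, 1 + a - b + j ≠ 0)
    (hd : ∀ j < m + 1, 1 + a - d + j ≠ 0) :
    (1 + a - b + m) * (1 + a - d + m) *
        ∑ k ∈ Finset.range (m + 1 + 1), wellPoisedTerm a b (-(m + 1 : ℕ)) d k =
      (1 + a + m) * (1 + a - b - d + m) *
        ∑ k ∈ Finset.range (m + 1), wellPoisedTerm a b (-m) d k := by
  have last_eq_zero := wellPoisedTerm_neg_natCast_of_lt a b d m.lt_succ_self
  have contiguous := sum_wellPoisedTerm_contiguous (c := -(m : K)) (m + 1)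
    (fun j hj => by exact_mod_cast ha (2 * j) (by lia)) hb
    (fun j hj => by convert ha (1 + m + j) (by lia) using 1; push_cast; ring) hd
  rw [last_eq_zero, mul_zero, Finset.sum_sub_distrib, ← Finset.mul_sum, ← Finset.mul_sum,
    sub_eq_zero, Finset.sum_range_succ (wellPoisedTerm a b (-m) d), last_eq_zero, add_zero,
    show -(m : K) - 1 = -(m + 1 : ℕ) by push_cast; ring] at contiguous
  linear_combination contiguous

theorem dougall_sum_general {a b d : K} (m : ℕ) (ha : ∀ j ≤ 2 * m, a + j ≠ 0)
    (hb : ∀ j < m, 1 + a - b + j ≠ 0) (hd : ∀ j < m, 1 + a - d + j ≠ 0) :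
    ∑ k ∈ Finset.range (m + 1), wellPoisedTerm a b (-m) d k =
      ((1 + a)⁽m⁾ * (1 + a - b - d)⁽m⁾) / ((1 + a - b)⁽m⁾ * (1 + a - d)⁽m⁾) := by
  induction m with
  | zero => simp
  | succ m ih =>
    have hbd : (1 + a - b + m) * (1 + a - d + m) ≠ 0 :=
      mul_ne_zero (hb m m.lt_succ_self) (hd m m.lt_succ_self)
    have recurrence := sum_wellPoisedTerm_neg_natCast_succ m ha hb hd
    rw [ih (fun j hj => ha j (by lia)) (fun j hj => hb j (by lia)) (fun j hj => hd j (by lia))]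
      at recurrence
    simp only [ascPochhammer_succ_eval]
    calc
      _ = (1 + a + m) * (1 + a - b - d + m) / ((1 + a - b + m) * (1 + a - d + m)) *
            ((1 + a)⁽m⁾ * (1 + a - b - d)⁽m⁾ / ((1 + a - b)⁽m⁾ * (1 + a - d)⁽m⁾)) := by
        rw [div_mul_eq_mul_div, eq_div_iff hbd, mul_comm, recurrence]
      _ = _ := by
        rw [div_mul_div_comm]
        congr 1 <;> ring

theorem ascPochhammer_eval_quotient_eq {a : K} (m : ℕ) (ha : a⁽m⁾ ≠ 0) :
    (a⁽m⁾ * (-(m + 2) : K)⁽m⁾) / ((2 : K)⁽m⁾ * (1 - a - m)⁽m⁾) = (m + 2) / 2 := by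
  have eval_two_ne_zero : (2 : K)⁽m⁾ ≠ 0 := by
    rw [← Nat.cast_two, ascPochhammer_nat_eq_natCast_ascFactorial]
    exact_mod_cast (Nat.ascFactorial_pos 1 m).ne'
  have three_eq : 2 * (3 : K)⁽m⁾ = (2 : K)⁽m⁾ * (2 + m) := by
    rw [← mul_ascPochhammer_eval_add_one, two_add_one_eq_three]
  rw [show -((m : K) + 2) = 1 - 3 - m by ring, ascPochhammer_eval_one_sub_sub_natCast,
    ascPochhammer_eval_one_sub_sub_natCast]
  field_simp
  linear_combination three_eq

end WellPoised

theorem poch_eq_ascPochhammer_eval (a : ℚ) (k : ℕ) : poch a k = a⁽k⁾ := by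
  induction k with
  | zero => simp [poch]
  | succ k ih => rw [ascPochhammer_succ_eval, ← ih, poch, poch, Finset.prod_range_succ]

theorem wellPoisedTerm_three_halves_one_half (x : ℚ) (k : ℕ) :
    wellPoisedTerm (3 / 2) (1 / 2) (2 - x) (2 + x) k =
      (poch (3 / 2) k * poch (7 / 4) k * poch (1 / 2) k * poch (2 - x) k * poch (2 + x) k) /
        (poch (3 / 4) k * poch 2 k * poch (x + 1 / 2) k * poch (1 / 2 - x) k *
          (k.factorial : ℚ)) := by
  simp only [poch_eq_ascPochhammer_eval, wellPoisedTerm]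
  ring_nf

/-- For every `n ≥ 2`, the terminating well-poised hypergeometric sum satisfies
`Σ_{k=0}^{n-2} [(3/2)_k (7/4)_k (1/2)_k (2-n)_k (2+n)_k] /
  [(3/4)_k (2)_k (n+1/2)_k (1/2-n)_k k!] = n/2`. -/
theorem dougall_sum (n : ℕ) (hn : 2 ≤ n) :
    ∑ k ∈ Finset.range (n - 1),
        (poch (3 / 2) k * poch (7 / 4) k * poch (1 / 2) k *
            poch (2 - (n : ℚ)) k * poch (2 + (n : ℚ)) k) /
          (poch (3 / 4) k * poch 2 k * poch ((n : ℚ) + 1 / 2) k *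
            poch (1 / 2 - (n : ℚ)) k * (Nat.factorial k : ℚ))
      = (n : ℚ) / 2 := by
  obtain ⟨m, rfl⟩ := Nat.exists_eq_add_of_le' hn
  simp only [← wellPoisedTerm_three_halves_one_half]
  push_cast
  rw [show 2 - ((m : ℚ) + 2) = -m by ring,
    dougall_sum_general m (fun j _ => by positivity) (fun j _ => by norm_num; positivity) ?_,
    ← ascPochhammer_eval_quotient_eq m (ascPochhammer_pos m (5 / 2 : ℚ) (by norm_num)).ne']
  · ring_nf
  · intro j hj
    have : (j : ℚ) < m := by exact_mod_cast hj
    linarith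
end

section
/- For every integer n ≥ 3, Σ_{ω ∈ R(w_0^B)} yb(ω) = 2(n² − 2) · Σ_{k=1}^{n−2} |R(w_k)|, where yb(ω) denotes the number of Yang–Baxter moves in ω. -/
/-- The generator `sᵢ` of the hyperoctahedral group `Bₙ`, realized as a permutation of `ℤ`:
`s₀` swaps `1` and `-1`; for `i ≥ 1`, `sᵢ` swaps `i` with `i+1` and `-i` with `-(i+1)`,
fixing all other integers. -/
def sB (i : ℕ) : Equiv.Perm ℤ :=
  if i = 0 then Equiv.swap 1 (-1)
  else Equiv.swap (i : ℤ) ((i : ℤ) + 1) * Equiv.swap (-(i : ℤ)) (-((i : ℤ) + 1))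

/-- The product `s_{i₁} ⋯ s_{i_ℓ}` corresponding to the word `i₁ ⋯ i_ℓ`. -/
def wordProd (l : List ℕ) : Equiv.Perm ℤ := (l.map sB).prod

/-- The underlying function of the longest element `w₀ᴮ ∈ Bₙ`: `i ↦ -i` on `{-n, …, n}`,
fixing all other integers. -/
def w0BFun (n : ℕ) : ℤ → ℤ := fun i => if -(n : ℤ) ≤ i ∧ i ≤ (n : ℤ) then -i else i

lemma w0BFun_involutive (n : ℕ) : Function.Involutive (w0BFun n) := by
  intro i
  unfold w0BFun
  split_ifs <;> omega

/-- The longest element `w₀ᴮ ∈ Bₙ`, as a permutation of `ℤ`. -/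
def w0B (n : ℕ) : Equiv.Perm ℤ := (w0BFun_involutive n).toPerm

/-- `l` is a reduced decomposition of `w` in `Bₙ`: a word over the alphabet `{0, …, n-1}`
whose product of generators is `w`, of minimal length among all such words. -/
def IsReducedWord (n : ℕ) (w : Equiv.Perm ℤ) (l : List ℕ) : Prop :=
  (∀ i ∈ l, i < n) ∧ wordProd l = w ∧
    ∀ l' : List ℕ, (∀ i ∈ l', i < n) → wordProd l' = w → l.length ≤ l'.length

/-- `R(w)`, the set of reduced decompositions of `w` in `Bₙ`. -/
def RSet (n : ℕ) (w : Equiv.Perm ℤ) : Set (List ℕ) := {l | IsReducedWord n w l}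

/-- The length `ℓ(w)` of `w ∈ Bₙ`: the minimal length of a word over `{0, …, n-1}`
whose product of generators is `w`. -/
noncomputable def lenB (n : ℕ) (w : Equiv.Perm ℤ) : ℕ :=
  sInf {m : ℕ | ∃ l : List ℕ, (∀ i ∈ l, i < n) ∧ wordProd l = w ∧ l.length = m}

/-- Whether a word begins with `k (k+1) k` or `(k+1) k (k+1)` for some `k ≥ 1`. -/
def isYB : List ℕ → Bool
  | a :: b :: c :: _ => (a != 0 && b == a + 1 && c == a) || (b != 0 && a == b + 1 && c == b + 1)
  | _ => false

/-- The number of Yang–Baxter moves in a word. -/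
def ybCount (l : List ℕ) : ℕ :=
  ((Finset.range l.length).filter fun j => isYB (l.drop j) = true).card

/-- Whether a word begins with `0101` or `1010`. -/
def is01 : List ℕ → Bool
  | a :: b :: c :: d :: _ =>
      (a == 0 && b == 1 && c == 0 && d == 1) || (a == 1 && b == 0 && c == 1 && d == 0)
  | _ => false

/-- The number of 01 moves in a word. -/
def m01Count (l : List ℕ) : ℕ :=
  ((Finset.range l.length).filter fun j => is01 (l.drop j) = true).card

/-- The underlying function of `w_k ∈ Bₙ`: `k ↦ -(k+2)`, `k+2 ↦ -k`, and `i ↦ -i` for all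
other `i ∈ {1, …, n}`, extended by `w(-i) = -w(i)` and fixing all integers outside
`{-n, …, -1, 1, …, n}`. -/
def wkFun (n k : ℕ) : ℤ → ℤ := fun i =>
  if -(n : ℤ) ≤ i ∧ i ≤ (n : ℤ) then
    if i = (k : ℤ) then -((k : ℤ) + 2)
    else if i = (k : ℤ) + 2 then -(k : ℤ)
    else if i = -(k : ℤ) then (k : ℤ) + 2
    else if i = -((k : ℤ) + 2) then (k : ℤ)
    else -i
  else i

/-- The underlying function of `w' ∈ Bₙ`: `1 ↦ 1`, `2 ↦ 2`, and `i ↦ -i` for `3 ≤ i ≤ n`,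
extended by `w(-i) = -w(i)` and fixing all integers outside `{-n, …, -1, 1, …, n}`. -/
def wpFun (n : ℕ) : ℤ → ℤ := fun i =>
  if (-(n : ℤ) ≤ i ∧ i ≤ (n : ℤ)) ∧ (i < -2 ∨ 2 < i) then -i else i

/-- `w`, viewed as a signed permutation of `{1, …, n}` via the values `w(1), …, w(n)`,
contains the signed pattern `p` (given by its list of values `p(1), …, p(m)`). -/
def ContainsPattern (n : ℕ) (w : ℤ → ℤ) (p : List ℤ) : Prop :=
  ∃ j : Fin p.length → ℤ, StrictMono j ∧ (∀ r, 1 ≤ j r ∧ j r ≤ (n : ℤ)) ∧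
    (∀ r s, w (j r) < w (j s) ↔ p.get r < p.get s) ∧
    (∀ r, w (j r) < 0 ↔ p.get r < 0)

/-!
The longest element `w₀ᴮ` is central, so moving the first letter of a reduced word of `w₀ᴮ` to
its end gives another reduced word of `w₀ᴮ`. Rotating each of the `n² - 2` windows of three
consecutive letters to the front, one sees that all of them carry equally many Yang–Baxter moves.

Let `tₖ = sₖ sₖ₊₁ sₖ = sₖ₊₁ sₖ sₖ₊₁`. Since `ℓ(u⁻¹ w₀ᴮ) = n² - ℓ(u)` for every `u ∈ Bₙ`, deleting
the initial braid word is a bijection from the reduced words of `w₀ᴮ` that start with a given one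
of the two words for `tₖ` onto `R(tₖ w₀ᴮ) = R(w_k)`. This explains the factor `2` and the sum.
-/

lemma sB_apply (a : ℕ) (i : ℤ) : sB a i =
    if i = a + 1 then (if a = 0 then -1 else (a : ℤ))
    else if i = -(a + 1) then (if a = 0 then 1 else -(a : ℤ))
    else if a = 0 then i
    else if i = a then (a : ℤ) + 1 else if i = -a then -((a : ℤ) + 1) else i := by
  unfold sB
  split <;> simp only [Equiv.Perm.mul_apply, Equiv.swap_apply_def] <;> split_ifs <;> omega

lemma sB_sB_apply (a : ℕ) (i : ℤ) : sB a (sB a i) = i := by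
  rw [sB_apply a (sB a i), sB_apply]
  split_ifs <;> omega

lemma sB_apply_neg (a : ℕ) (i : ℤ) : sB a (-i) = -sB a i := by
  rw [sB_apply, sB_apply]
  split_ifs <;> omega

lemma sB_mul_self (a : ℕ) : sB a * sB a = 1 :=
  Equiv.ext (sB_sB_apply a)

lemma sB_inv (a : ℕ) : (sB a)⁻¹ = sB a :=
  inv_eq_of_mul_eq_one_left (sB_mul_self a)

lemma wordProd_cons (a : ℕ) (l : List ℕ) : wordProd (a :: l) = sB a * wordProd l := by
  simp only [wordProd, List.map_cons, List.prod_cons]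

lemma wordProd_singleton (a : ℕ) : wordProd [a] = sB a := by
  simp only [wordProd, List.map_singleton, List.prod_singleton]

lemma wordProd_append (l l' : List ℕ) : wordProd (l ++ l') = wordProd l * wordProd l' := by
  simp only [wordProd, List.map_append, List.prod_append]

lemma wordProd_reverse (l : List ℕ) : wordProd l.reverse = (wordProd l)⁻¹ := by
  rw [wordProd, wordProd, List.prod_inv_reverse, List.map_map, List.map_reverse]
  exact congrArg (fun l => (List.reverse l).prod) (List.map_congr_left fun a _ => (sB_inv a).symm)

/-- The hyperoctahedral group `Bₙ`, as the subgroup of permutations of `ℤ` that commute with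
negation and fix every integer of absolute value larger than `n`. -/
def signedPerm (n : ℕ) : Subgroup (Equiv.Perm ℤ) where
  carrier := {w | (∀ i, w (-i) = -w i) ∧ ∀ i, (n : ℤ) < i → w i = i}
  one_mem' := ⟨fun _ => rfl, fun _ _ => rfl⟩
  mul_mem' {u v} hu hv :=
    ⟨fun i => by rw [Equiv.Perm.mul_apply, hv.1, hu.1, Equiv.Perm.mul_apply],
      fun i hi => by rw [Equiv.Perm.mul_apply, hv.2 i hi, hu.2 i hi]⟩
  inv_mem' {w} hw :=
    ⟨fun i => by rw [Equiv.Perm.inv_eq_iff_eq, hw.1]; exact congrArg _ (w.apply_symm_apply i).symm,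
      fun i hi => by rw [Equiv.Perm.inv_eq_iff_eq, hw.2 i hi]⟩

section SignedPerm

variable {n : ℕ} {w : Equiv.Perm ℤ}

lemma apply_neg_of_mem_signedPerm (hw : w ∈ signedPerm n) (i : ℤ) : w (-i) = -w i :=
  hw.1 i

lemma apply_zero_of_mem_signedPerm (hw : w ∈ signedPerm n) : w 0 = 0 :=
  self_eq_neg.1 (apply_neg_of_mem_signedPerm hw 0)

lemma apply_eq_self_of_mem_signedPerm (hw : w ∈ signedPerm n) {i : ℤ} (hi : (n : ℤ) < |i|) :
    w i = i := by
  rcases lt_abs.1 hi with h | h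
  · exact hw.2 i h
  · rw [← neg_inj, ← apply_neg_of_mem_signedPerm hw, hw.2 (-i) h]

lemma abs_apply_le_of_mem_signedPerm (hw : w ∈ signedPerm n) {i : ℤ} (hi : |i| ≤ n) :
    |w i| ≤ n := by
  by_contra! h
  rw [w.injective (apply_eq_self_of_mem_signedPerm hw h)] at h
  exact h.not_ge hi

lemma sB_mem_signedPerm {a : ℕ} (ha : a < n) : sB a ∈ signedPerm n :=
  ⟨sB_apply_neg a, fun i hi => by rw [sB_apply]; split_ifs <;> omega⟩

lemma wordProd_mem_signedPerm {l : List ℕ} (hl : ∀ i ∈ l, i < n) :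
    wordProd l ∈ signedPerm n :=
  Subgroup.list_prod_mem _ <| List.forall_mem_map.2 fun i hi => sB_mem_signedPerm (hl i hi)

lemma w0B_apply_of_abs_le {i : ℤ} (hi : |i| ≤ n) : w0B n i = -i :=
  if_pos (abs_le.1 hi)

lemma w0B_apply_of_lt_abs {i : ℤ} (hi : (n : ℤ) < |i|) : w0B n i = i :=
  if_neg fun h => hi.not_ge (abs_le.2 h)

lemma commute_w0B_of_mem_signedPerm (hw : w ∈ signedPerm n) : Commute w (w0B n) := by
  refine Equiv.ext fun i => ?_
  rw [Equiv.Perm.mul_apply, Equiv.Perm.mul_apply]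
  rcases le_or_gt |i| n with hi | hi
  · rw [w0B_apply_of_abs_le hi, w0B_apply_of_abs_le (abs_apply_le_of_mem_signedPerm hw hi),
      apply_neg_of_mem_signedPerm hw]
  · rw [apply_eq_self_of_mem_signedPerm hw hi, w0B_apply_of_lt_abs hi,
      apply_eq_self_of_mem_signedPerm hw hi]

lemma w0B_mem_signedPerm (n : ℕ) : w0B n ∈ signedPerm n := by
  refine ⟨fun i => ?_, fun i hi => w0B_apply_of_lt_abs (hi.trans_le (le_abs_self i))⟩
  rcases le_or_gt |i| n with hi | hi
  · rw [w0B_apply_of_abs_le hi, w0B_apply_of_abs_le ((abs_neg i).trans_le hi)]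
  · rw [w0B_apply_of_lt_abs hi, w0B_apply_of_lt_abs (hi.trans_eq (abs_neg i).symm)]

lemma eq_one_of_forall_apply_lt_apply_succ (hw : w ∈ signedPerm n)
    (hlt : ∀ a : ℕ, a < n → w a < w (a + 1)) : w = 1 := by
  have h_zero := apply_zero_of_mem_signedPerm hw
  have h_fix : ∀ a : ℕ, n < a → w a = a := fun a ha =>
    apply_eq_self_of_mem_signedPerm hw (by rw [Nat.abs_cast]; exact_mod_cast ha)
  have h_le : w n ≤ n := (abs_le.1 (abs_apply_le_of_mem_signedPerm hw (Nat.abs_cast n).le)).2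
  have h_mono : Monotone fun a : ℕ => w a - a := by
    refine monotone_nat_of_le_succ fun a => ?_
    rcases lt_trichotomy a n with ha | rfl | ha
    · have := hlt a ha
      push_cast
      omega
    · have := h_fix (a + 1) (by omega)
      omega
    · have := h_fix a ha
      have := h_fix (a + 1) (by omega)
      omega
  have h_nat (a : ℕ) : w a = a := by
    have h_lower := h_mono (Nat.zero_le a)
    have h_upper := h_mono (show a ≤ a + n + 1 by omega)
    have := h_fix (a + n + 1) (by omega)
    simp only [Nat.cast_zero, h_zero] at h_lower h_upper
    omega
  refine Equiv.ext fun i => ?_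
  obtain ⟨a, rfl | rfl⟩ := Int.eq_nat_or_neg i
  · exact h_nat a
  · rw [apply_neg_of_mem_signedPerm hw, h_nat, Equiv.Perm.one_apply]

end SignedPerm

/-- The positive roots of `Bₙ`. With `e₋ᵢ = -eᵢ` and `e₀ = 0`, the pair `(i, j)` encodes the
root `e_j - e_i`; the pair `(-j, -i)` encodes the same root, and `|i| < j` selects one of the two
pairs for each positive root. -/
noncomputable def posRoots (n : ℕ) : Finset (ℤ × ℤ) :=
  (Finset.Icc (-(n : ℤ)) n ×ˢ Finset.Icc 1 (n : ℤ)).filter fun p => -p.2 < p.1 ∧ p.1 < p.2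

/-- The inversions of `w ∈ Bₙ`: the positive roots that `w` makes negative. -/
noncomputable def inversions (n : ℕ) (w : Equiv.Perm ℤ) : Finset (ℤ × ℤ) :=
  (posRoots n).filter fun p => w p.2 < w p.1

/-- The simple root `e_{a+1} - e_a` of the generator `sₐ`; it is `e₁` for `a = 0`. -/
def simpleRoot (a : ℕ) : ℤ × ℤ := (a, a + 1)

/-- The action of `sₐ` on positive roots other than `simpleRoot a`, which it permutes. The pair
`(sₐ i, sₐ j)` is replaced by the other pair of the same root when it is not the one selected in
`posRoots`. -/
def reflectRoot (a : ℕ) (p : ℤ × ℤ) : ℤ × ℤ :=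
  if sB a p.1 + sB a p.2 < 0 then (-sB a p.2, -sB a p.1) else (sB a p.1, sB a p.2)

lemma mem_posRoots {n : ℕ} {p : ℤ × ℤ} :
    p ∈ posRoots n ↔ -p.2 < p.1 ∧ p.1 < p.2 ∧ p.2 ≤ n := by
  simp only [posRoots, Finset.mem_filter, Finset.mem_product, Finset.mem_Icc]
  omega

lemma posRoots_succ (n : ℕ) : posRoots (n + 1) =
    posRoots n ∪ Finset.Ioo (-((n : ℤ) + 1)) (n + 1) ×ˢ {(n : ℤ) + 1} := by
  ext p
  simp only [mem_posRoots, Finset.mem_union, Finset.mem_product, Finset.mem_Ioo,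
    Finset.mem_singleton]
  omega

lemma card_posRoots (n : ℕ) : (posRoots n).card = n ^ 2 := by
  induction n with
  | zero => rfl
  | succ n ih =>
    have h_disj : Disjoint (posRoots n)
        (Finset.Ioo (-((n : ℤ) + 1)) (n + 1) ×ˢ {(n : ℤ) + 1}) := by
      refine Finset.disjoint_left.2 fun p hp hp' => ?_
      have h_eq := Finset.mem_singleton.1 (Finset.mem_product.1 hp').2
      have := (mem_posRoots.1 hp).2.2
      omega
    have h_card : (Finset.Ioo (-((n : ℤ) + 1)) (n + 1)).card = 2 * n + 1 := by
      rw [Int.card_Ioo]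
      omega
    rw [posRoots_succ, Finset.card_union_of_disjoint h_disj, ih, Finset.card_product, h_card,
      Finset.card_singleton]
    ring

lemma mem_inversions {n : ℕ} {w : Equiv.Perm ℤ} {p : ℤ × ℤ} :
    p ∈ inversions n w ↔ p ∈ posRoots n ∧ w p.2 < w p.1 :=
  Finset.mem_filter

lemma simpleRoot_mem_posRoots {n a : ℕ} (ha : a < n) : simpleRoot a ∈ posRoots n := by
  rw [mem_posRoots, simpleRoot]
  omega

lemma inversions_one (n : ℕ) : inversions n 1 = ∅ :=
  Finset.filter_eq_empty_iff.2 fun _ hp => (mem_posRoots.1 hp).2.1.not_gt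

lemma card_inversions_w0B_mul {n : ℕ} {w : Equiv.Perm ℤ} (hw : w ∈ signedPerm n) :
    (inversions n (w0B n * w)).card + (inversions n w).card = n ^ 2 := by
  have h_compl : inversions n (w0B n * w) = (posRoots n).filter fun p => ¬ w p.2 < w p.1 := by
    refine Finset.filter_congr fun p hp => ?_
    obtain ⟨h_left, h_lt, h_right⟩ := mem_posRoots.1 hp
    have h_ne : w p.1 ≠ w p.2 := w.injective.ne h_lt.ne
    have h₁ := abs_apply_le_of_mem_signedPerm hw (abs_le.2 ⟨by omega, by omega⟩ : |p.1| ≤ n)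
    have h₂ := abs_apply_le_of_mem_signedPerm hw (abs_le.2 ⟨by omega, by omega⟩ : |p.2| ≤ n)
    rw [Equiv.Perm.mul_apply, Equiv.Perm.mul_apply, w0B_apply_of_abs_le h₁,
      w0B_apply_of_abs_le h₂]
    omega
  rw [h_compl, add_comm, inversions, Finset.card_filter_add_card_filter_not, card_posRoots]

section ReflectRoot

variable {n a : ℕ} {w : Equiv.Perm ℤ} {p : ℤ × ℤ}

lemma reflectRoot_mem_posRoots (ha : a < n) (hp : p ∈ posRoots n) (hne : p ≠ simpleRoot a) :
    reflectRoot a p ∈ posRoots n := by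
  obtain ⟨i, j⟩ := p
  simp only [simpleRoot, ne_eq, Prod.mk.injEq, mem_posRoots, reflectRoot, sB_apply] at hp hne ⊢
  split_ifs <;> omega

lemma reflectRoot_ne_simpleRoot (hp : p ∈ posRoots n) :
    reflectRoot a p ≠ simpleRoot a := by
  obtain ⟨i, j⟩ := p
  simp only [simpleRoot, ne_eq, mem_posRoots, reflectRoot, sB_apply] at hp ⊢
  split_ifs <;> rw [Prod.mk.injEq] <;> omega

lemma reflectRoot_reflectRoot (hp : p ∈ posRoots n) :
    reflectRoot a (reflectRoot a p) = p := by
  have h_sum : 0 < p.1 + p.2 := by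
    have := (mem_posRoots.1 hp).1
    omega
  by_cases h_neg : sB a p.1 + sB a p.2 < 0
  · have h_eq : reflectRoot a p = (-sB a p.2, -sB a p.1) := if_pos h_neg
    rw [h_eq, reflectRoot]
    simp only [sB_apply_neg, sB_sB_apply, neg_neg]
    exact if_pos (by omega)
  · have h_eq : reflectRoot a p = (sB a p.1, sB a p.2) := if_neg h_neg
    rw [h_eq, reflectRoot]
    simp only [sB_sB_apply]
    exact if_neg (by omega)

lemma apply_reflectRoot_lt_iff (hw : w ∈ signedPerm n) :
    w (reflectRoot a p).2 < w (reflectRoot a p).1 ↔ w (sB a p.2) < w (sB a p.1) := by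
  unfold reflectRoot
  split_ifs
  · rw [apply_neg_of_mem_signedPerm hw, apply_neg_of_mem_signedPerm hw, neg_lt_neg_iff]
  · rfl

lemma reflectRoot_mem_erase_inversions (hw : w ∈ signedPerm n) (ha : a < n)
    (hp : p ∈ (inversions n (w * sB a)).erase (simpleRoot a)) :
    reflectRoot a p ∈ (inversions n w).erase (simpleRoot a) := by
  obtain ⟨hne, hp⟩ := Finset.mem_erase.1 hp
  obtain ⟨h_pos, h_inv⟩ := mem_inversions.1 hp
  exact Finset.mem_erase.2 ⟨reflectRoot_ne_simpleRoot h_pos, mem_inversions.2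
    ⟨reflectRoot_mem_posRoots ha h_pos hne, (apply_reflectRoot_lt_iff hw).2 h_inv⟩⟩

lemma card_erase_inversions_mul_sB (hw : w ∈ signedPerm n) (ha : a < n) :
    ((inversions n (w * sB a)).erase (simpleRoot a)).card =
      ((inversions n w).erase (simpleRoot a)).card := by
  have h_invol : ∀ w' : Equiv.Perm ℤ, ∀ p ∈ (inversions n w').erase (simpleRoot a),
      reflectRoot a (reflectRoot a p) = p := fun w' p hp =>
    reflectRoot_reflectRoot (mem_inversions.1 (Finset.mem_of_mem_erase hp)).1
  refine Finset.card_nbij' (reflectRoot a) (reflectRoot a)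
    (fun p hp => reflectRoot_mem_erase_inversions hw ha hp) (fun p hp => ?_)
    (h_invol _) (h_invol _)
  refine reflectRoot_mem_erase_inversions (mul_mem hw (sB_mem_signedPerm ha)) ha ?_
  rwa [mul_assoc, sB_mul_self, mul_one]

end ReflectRoot

section Length

variable {n a : ℕ} {w : Equiv.Perm ℤ} {l : List ℕ}

lemma card_inversions_mul_sB_le (hw : w ∈ signedPerm n) (ha : a < n) :
    (inversions n (w * sB a)).card ≤ (inversions n w).card + 1 := by
  have h_insert := Finset.card_insert_le (simpleRoot a)
    ((inversions n (w * sB a)).erase (simpleRoot a))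
  calc (inversions n (w * sB a)).card
      ≤ ((inversions n (w * sB a)).erase (simpleRoot a)).card + 1 :=
        (Finset.card_le_card (Finset.insert_erase_subset _ _)).trans h_insert
    _ = ((inversions n w).erase (simpleRoot a)).card + 1 := by
        rw [card_erase_inversions_mul_sB hw ha]
    _ ≤ (inversions n w).card + 1 := Nat.succ_le_succ Finset.card_erase_le

lemma apply_sB_simpleRoot_lt_iff (hw : w ∈ signedPerm n) :
    w (sB a (simpleRoot a).2) < w (sB a (simpleRoot a).1) ↔ w a < w (a + 1) := by
  rcases a.eq_zero_or_pos with rfl | ha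
  · have h_one : sB 0 1 = -1 := by simp [sB_apply]
    have h_zero : sB 0 0 = 0 := by simp [sB_apply]
    simp only [simpleRoot, Nat.cast_zero, zero_add, h_one, h_zero,
      apply_neg_of_mem_signedPerm hw, apply_zero_of_mem_signedPerm hw, Left.neg_neg_iff]
  · have h_succ : sB a (a + 1) = a := by simp [sB_apply, ha.ne']
    rw [simpleRoot, h_succ, ← h_succ, sB_sB_apply, h_succ]

lemma card_inversions_mul_sB_add_one (hw : w ∈ signedPerm n) (ha : a < n)
    (h_desc : w (a + 1) < w a) : (inversions n (w * sB a)).card + 1 = (inversions n w).card := by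
  have h_mem : simpleRoot a ∈ inversions n w :=
    mem_inversions.2 ⟨simpleRoot_mem_posRoots ha, h_desc⟩
  have h_notMem : simpleRoot a ∉ inversions n (w * sB a) := fun h => by
    have h_asc := (apply_sB_simpleRoot_lt_iff hw).1 (mem_inversions.1 h).2
    exact h_asc.not_gt h_desc
  rw [← Finset.erase_eq_of_notMem h_notMem, card_erase_inversions_mul_sB hw ha,
    Finset.card_erase_add_one h_mem]

lemma card_inversions_wordProd_le (hl : ∀ i ∈ l, i < n) :
    (inversions n (wordProd l)).card ≤ l.length := by
  induction l using List.reverseRecOn with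
  | nil => exact (congrArg Finset.card (inversions_one n)).le
  | append_singleton l a ih =>
    obtain ⟨hl, ha⟩ := List.forall_mem_append.1 hl
    rw [wordProd_append, wordProd_singleton, List.length_append, List.length_singleton]
    have h_step := card_inversions_mul_sB_le (wordProd_mem_signedPerm hl)
      (ha a (List.mem_singleton_self a))
    exact h_step.trans (Nat.succ_le_succ (ih hl))

lemma exists_descent_of_ne_one (hw : w ∈ signedPerm n) (hne : w ≠ 1) :
    ∃ a < n, w (a + 1) < w a := by
  contrapose! hne
  refine eq_one_of_forall_apply_lt_apply_succ hw fun a ha => (hne a ha).lt_of_ne ?_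
  exact w.injective.ne (by omega)

lemma exists_wordProd_eq_length_eq_card_inversions (hw : w ∈ signedPerm n) :
    ∃ l : List ℕ, (∀ i ∈ l, i < n) ∧ wordProd l = w ∧ l.length = (inversions n w).card := by
  induction hm : (inversions n w).card generalizing w with
  | zero =>
    by_cases h_one : w = 1
    · exact ⟨[], List.forall_mem_nil _, h_one.symm, rfl⟩
    · obtain ⟨a, ha, h_desc⟩ := exists_descent_of_ne_one hw h_one
      have := card_inversions_mul_sB_add_one hw ha h_desc
      omega
  | succ m ih =>
    have h_ne : w ≠ 1 := by
      rintro rfl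
      rw [inversions_one] at hm
      exact m.succ_ne_zero hm.symm
    obtain ⟨a, ha, h_desc⟩ := exists_descent_of_ne_one hw h_ne
    have h_step := card_inversions_mul_sB_add_one hw ha h_desc
    obtain ⟨l, hl, h_prod, h_length⟩ :=
      ih (mul_mem hw (sB_mem_signedPerm ha)) (by omega)
    refine ⟨l ++ [a], List.forall_mem_append.2 ⟨hl, List.forall_mem_singleton.2 ha⟩, ?_, ?_⟩
    · rw [wordProd_append, wordProd_singleton, h_prod, mul_assoc, sB_mul_self, mul_one]
    · rw [List.length_append, List.length_singleton, h_length]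

lemma mem_RSet_iff (hw : w ∈ signedPerm n) : l ∈ RSet n w ↔
    (∀ i ∈ l, i < n) ∧ wordProd l = w ∧ l.length = (inversions n w).card := by
  constructor
  · rintro ⟨hl, rfl, h_min⟩
    obtain ⟨l', hl', h_prod, h_length⟩ := exists_wordProd_eq_length_eq_card_inversions hw
    exact ⟨hl, rfl, (h_length ▸ h_min l' hl' h_prod).antisymm (card_inversions_wordProd_le hl)⟩
  · rintro ⟨hl, rfl, h_length⟩
    refine ⟨hl, rfl, fun l' hl' h_prod => ?_⟩
    rw [h_length, ← h_prod]
    exact card_inversions_wordProd_le hl'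

lemma card_inversions_inv_le (hw : w ∈ signedPerm n) :
    (inversions n w⁻¹).card ≤ (inversions n w).card := by
  obtain ⟨l, hl, rfl, h_length⟩ := exists_wordProd_eq_length_eq_card_inversions hw
  rw [← wordProd_reverse, ← h_length, ← List.length_reverse]
  exact card_inversions_wordProd_le fun i hi => hl i (List.mem_reverse.1 hi)

lemma card_inversions_inv (hw : w ∈ signedPerm n) :
    (inversions n w⁻¹).card = (inversions n w).card := by
  refine (card_inversions_inv_le hw).antisymm ?_
  simpa only [inv_inv] using card_inversions_inv_le (inv_mem hw)

lemma card_inversions_w0B (n : ℕ) : (inversions n (w0B n)).card = n ^ 2 := by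
  simpa only [mul_one, inversions_one, Finset.card_empty, add_zero] using
    card_inversions_w0B_mul (one_mem (signedPerm n))

lemma length_eq_of_mem_RSet_w0B (hl : l ∈ RSet n (w0B n)) : l.length = n ^ 2 := by
  rw [((mem_RSet_iff (w0B_mem_signedPerm n)).1 hl).2.2, card_inversions_w0B]

lemma append_mem_RSet_w0B_iff {u v : List ℕ} (hu : u ∈ RSet n (wordProd u)) :
    u ++ v ∈ RSet n (w0B n) ↔ v ∈ RSet n ((wordProd u)⁻¹ * w0B n) := by
  have hu_mem : wordProd u ∈ signedPerm n := wordProd_mem_signedPerm hu.1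
  have hu_length := ((mem_RSet_iff hu_mem).1 hu).2.2
  have h_card := card_inversions_w0B_mul (inv_mem hu_mem)
  rw [card_inversions_inv hu_mem, ← hu_length,
    ← (commute_w0B_of_mem_signedPerm (inv_mem hu_mem)).eq] at h_card
  rw [mem_RSet_iff (w0B_mem_signedPerm n), mem_RSet_iff (mul_mem (inv_mem hu_mem)
    (w0B_mem_signedPerm n)), List.forall_mem_append, wordProd_append, List.length_append,
    eq_inv_mul_iff_mul_eq, card_inversions_w0B, ← h_card, add_comm u.length,
    Nat.add_right_cancel_iff]
  exact and_congr_left' (and_iff_right hu.1)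

end Length

lemma finite_RSet (n : ℕ) (w : Equiv.Perm ℤ) : (RSet n w).Finite := by
  rcases (RSet n w).eq_empty_or_nonempty with h_empty | ⟨l₀, hl₀⟩
  · exact h_empty ▸ Set.finite_empty
  refine ((List.finite_length_eq (Fin n) l₀.length).image (List.map Fin.val)).subset ?_
  intro l hl
  refine ⟨l.pmap Fin.mk hl.1, ?_, ?_⟩
  · rw [Set.mem_ofPred_eq, List.length_pmap]
    exact (hl.2.2 l₀ hl₀.1 hl₀.2.1).antisymm (hl₀.2.2 l hl.1 hl.2.1)
  · rw [List.map_pmap]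
    exact List.pmap_eq_self.2 fun _ _ => rfl

lemma rotate_mem_RSet {n : ℕ} {w : Equiv.Perm ℤ} (h_comm : ∀ a < n, Commute (sB a) w)
    {l : List ℕ} (hl : l ∈ RSet n w) (j : ℕ) : l.rotate j ∈ RSet n w := by
  induction j generalizing l with
  | zero => rwa [List.rotate_zero]
  | succ j ih =>
    cases l with
    | nil => rwa [List.rotate_nil]
    | cons a t =>
      obtain ⟨h_lt, h_prod, h_min⟩ := hl
      obtain ⟨ha, ht⟩ := List.forall_mem_cons.1 h_lt
      rw [List.rotate_cons_succ]
      refine ih ⟨List.forall_mem_append.2 ⟨ht, List.forall_mem_singleton.2 ha⟩, ?_, ?_⟩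
      · rw [wordProd_cons] at h_prod
        rw [wordProd_append, wordProd_singleton, ← mul_right_inj (sB a), ← mul_assoc, h_prod,
          (h_comm a ha).eq]
      · rwa [List.length_append, List.length_singleton]

/-- For `k ≥ 1`, the reflection in `Bₙ` that swaps `k` with `k + 2`: the common value `tₖ` of
`sₖ sₖ₊₁ sₖ` and `sₖ₊₁ sₖ sₖ₊₁`. -/
def braidReflection (k : ℕ) : Equiv.Perm ℤ :=
  Equiv.swap (k : ℤ) (k + 2) * Equiv.swap (-(k : ℤ)) (-(k + 2))

/-- The two sides of the braid relation between `sₖ` and `sₖ₊₁`; the flag selects the side. -/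
def braidWord (k : ℕ) : Bool → List ℕ
  | true => [k, k + 1, k]
  | false => [k + 1, k, k + 1]

section Braid

variable {n k : ℕ}

lemma braidReflection_apply (hk : 1 ≤ k) (i : ℤ) : braidReflection k i =
    if i = k then (k : ℤ) + 2 else if i = k + 2 then (k : ℤ)
    else if i = -k then -((k : ℤ) + 2) else if i = -(k + 2) then -(k : ℤ) else i := by
  simp only [braidReflection, Equiv.Perm.mul_apply, Equiv.swap_apply_def]
  split_ifs <;> omega

lemma mul_sB_mul_inv (hk : 1 ≤ k) {u : Equiv.Perm ℤ} (hu : ∀ i, u (-i) = -u i) :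
    u * sB k * u⁻¹ =
      Equiv.swap (u k) (u (k + 1)) * Equiv.swap (-u k) (-u (k + 1)) := by
  rw [sB, if_neg (Nat.ne_of_gt hk), ← hu, ← hu, Equiv.swap_apply_apply, Equiv.swap_apply_apply]
  group

lemma wordProd_braidWord (hk : 1 ≤ k) (b : Bool) :
    wordProd (braidWord k b) = braidReflection k := by
  cases b
  · have h_left : sB (k + 1) k = k := by grind [sB_apply]
    have h_right : sB (k + 1) (k + 1) = k + 2 := by grind [sB_apply]
    have h_conj := mul_sB_mul_inv hk (sB_apply_neg (k + 1))
    rwa [sB_inv, h_left, h_right, mul_assoc, ← wordProd_singleton k, ← wordProd_singleton (k + 1),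
      ← wordProd_append, ← wordProd_append] at h_conj
  · have h_left : sB k ((k + 1 : ℕ) : ℤ) = k := by grind [sB_apply]
    have h_right : sB k ((k + 1 : ℕ) + 1 : ℤ) = k + 2 := by grind [sB_apply]
    have h_conj := mul_sB_mul_inv k.succ_pos (sB_apply_neg k)
    rwa [sB_inv, h_left, h_right, mul_assoc, ← wordProd_singleton k, ← wordProd_singleton (k + 1),
      ← wordProd_append, ← wordProd_append] at h_conj

lemma inversions_braidReflection (hk : 1 ≤ k) (hkn : k + 2 ≤ n) :
    inversions n (braidReflection k) =
      {((k : ℤ), (k : ℤ) + 1), ((k : ℤ), (k : ℤ) + 2), ((k : ℤ) + 1, (k : ℤ) + 2)} := by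
  ext ⟨i, j⟩
  simp only [mem_inversions, mem_posRoots, braidReflection_apply hk, Finset.mem_insert,
    Finset.mem_singleton, Prod.mk.injEq]
  split_ifs <;> omega

lemma card_inversions_braidReflection (hk : 1 ≤ k) (hkn : k + 2 ≤ n) :
    (inversions n (braidReflection k)).card = 3 := by
  rw [inversions_braidReflection hk hkn, Finset.card_eq_three]
  exact ⟨_, _, _, by simp, by simp, by simp, rfl⟩

lemma forall_mem_braidWord_lt (hkn : k + 2 ≤ n) (b : Bool) : ∀ i ∈ braidWord k b, i < n := by
  cases b <;> simp only [braidWord, List.forall_mem_cons, List.not_mem_nil] <;> grind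

lemma braidWord_mem_RSet (hk : 1 ≤ k) (hkn : k + 2 ≤ n) (b : Bool) :
    braidWord k b ∈ RSet n (braidReflection k) := by
  have h_lt := forall_mem_braidWord_lt hkn b
  have h_prod := wordProd_braidWord hk b
  refine (mem_RSet_iff (h_prod ▸ wordProd_mem_signedPerm h_lt)).2 ⟨h_lt, h_prod, ?_⟩
  rw [card_inversions_braidReflection hk hkn]
  cases b <;> rfl

lemma braidWord_append_mem_RSet_w0B_iff (hk : 1 ≤ k) (hkn : k + 2 ≤ n) (b : Bool)
    {v : List ℕ} : braidWord k b ++ v ∈ RSet n (w0B n) ↔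
      v ∈ RSet n ((braidReflection k)⁻¹ * w0B n) := by
  have h_prod := wordProd_braidWord hk b
  rw [← h_prod]
  exact append_mem_RSet_w0B_iff (h_prod.symm ▸ braidWord_mem_RSet hk hkn b)

lemma eq_braidReflection_inv_mul_w0B (hk : 1 ≤ k) (hkn : k + 2 ≤ n) {w : Equiv.Perm ℤ}
    (hw : ∀ i, w i = wkFun n k i) : w = (braidReflection k)⁻¹ * w0B n := by
  rw [eq_inv_mul_iff_mul_eq]
  refine Equiv.ext fun i => ?_
  change braidReflection k (w i) = w0BFun n i
  rw [hw, braidReflection_apply hk, wkFun, w0BFun]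
  split_ifs <;> omega

lemma injective_braidWord_append :
    Function.Injective fun x : (_ : ℕ) × Bool × List ℕ => braidWord x.1 x.2.1 ++ x.2.2 := by
  rintro ⟨k, b, v⟩ ⟨k', b', v'⟩ h
  cases b <;> cases b' <;> simp only [braidWord, List.cons_append, List.nil_append,
    List.cons.injEq] at h
  · obtain ⟨-, rfl, -, rfl⟩ := h
    rfl
  · omega
  · omega
  · obtain ⟨rfl, -, -, rfl⟩ := h
    rfl

end Braid

section YangBaxter

variable {l : List ℕ}

lemma isYB_iff : isYB l = true ↔ ∃ k b v, 1 ≤ k ∧ braidWord k b ++ v = l := by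
  constructor
  · intro h
    match l, h with
    | a :: b :: c :: v, h =>
      simp only [isYB, Bool.or_eq_true, Bool.and_eq_true, bne_iff_ne, beq_iff_eq] at h
      obtain ⟨⟨h_ne, rfl⟩, rfl⟩ | ⟨⟨h_ne, rfl⟩, rfl⟩ := h
      · exact ⟨c, true, v, Nat.pos_of_ne_zero h_ne, rfl⟩
      · exact ⟨b, false, v, Nat.pos_of_ne_zero h_ne, rfl⟩
  · rintro ⟨k, b, v, hk, rfl⟩
    cases b <;> simp [isYB, braidWord, Nat.ne_of_gt hk]

lemma three_le_length_of_isYB (h : isYB l = true) : 3 ≤ l.length := by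
  obtain ⟨k, b, v, -, rfl⟩ := isYB_iff.1 h
  rw [List.length_append]
  exact le_add_right (by cases b <;> rfl)

lemma isYB_append_of_three_le_length (hl : 3 ≤ l.length) (v : List ℕ) :
    isYB (l ++ v) = isYB l := by
  match l, hl with
  | _ :: _ :: _ :: _, _ => rfl

lemma isYB_rotate_eq_isYB_drop {j : ℕ} (hj : j + 3 ≤ l.length) :
    isYB (l.rotate j) = isYB (l.drop j) := by
  rw [List.rotate_eq_drop_append_take (by omega)]
  refine isYB_append_of_three_le_length ?_ _
  rw [List.length_drop]
  omega

lemma ybCount_eq_sum_isYB_rotate (l : List ℕ) :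
    ybCount l = ∑ j ∈ Finset.range (l.length - 2), if isYB (l.rotate j) = true then 1 else 0 := by
  rw [ybCount, ← Finset.card_filter]
  congr 1
  ext j
  simp only [Finset.mem_filter, Finset.mem_range]
  constructor
  · rintro ⟨-, h⟩
    have hj := three_le_length_of_isYB h
    rw [List.length_drop] at hj
    exact ⟨by omega, by rwa [isYB_rotate_eq_isYB_drop (by omega)]⟩
  · rintro ⟨hj, h⟩
    exact ⟨by omega, by rwa [← isYB_rotate_eq_isYB_drop (by omega)]⟩

lemma sum_rotate_eq_sum {M : Type*} [AddCommMonoid M] {α : Type*} {S : Finset (List α)}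
    (h_rot : ∀ l ∈ S, ∀ j, l.rotate j ∈ S) (f : List α → M) (j : ℕ) :
    ∑ l ∈ S, f (l.rotate j) = ∑ l ∈ S, f l := by
  let r : List α ↪ List α := ⟨fun l => l.rotate j, List.rotate_injective j⟩
  have h_map : S.map r = S := Finset.map_eq_of_subset fun _ hl => by
    obtain ⟨l, hl', rfl⟩ := Finset.mem_map.1 hl
    exact h_rot l hl' j
  conv_rhs => rw [← h_map, Finset.sum_map]
  rfl

lemma finsum_mem_ybCount {S : Set (List ℕ)} {N : ℕ} (hS : S.Finite)
    (h_length : ∀ l ∈ S, l.length = N) (h_rot : ∀ l ∈ S, ∀ j, l.rotate j ∈ S) :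
    ∑ᶠ ω ∈ S, ybCount ω = (N - 2) * {ω ∈ S | isYB ω = true}.ncard := by
  lift S to Finset (List ℕ) using hS
  simp only [Finset.mem_coe] at h_length h_rot ⊢
  calc ∑ᶠ ω ∈ S, ybCount ω
      = ∑ ω ∈ S, ∑ j ∈ Finset.range (N - 2), if isYB (ω.rotate j) = true then 1 else 0 := by
        rw [finsum_mem_finset_eq_sum]
        refine Finset.sum_congr rfl fun ω hω => ?_
        rw [ybCount_eq_sum_isYB_rotate, h_length ω hω]
    _ = ∑ j ∈ Finset.range (N - 2), ∑ ω ∈ S, if isYB ω = true then 1 else 0 := by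
        rw [Finset.sum_comm]
        exact Finset.sum_congr rfl fun j _ =>
          sum_rotate_eq_sum h_rot (fun ω => if isYB ω = true then 1 else 0) j
    _ = (N - 2) * {ω ∈ S | isYB ω = true}.card := by
        rw [Finset.sum_const, Finset.card_range, smul_eq_mul, Finset.card_filter]
    _ = (N - 2) * {ω | ω ∈ S ∧ isYB ω = true}.ncard := by
        rw [← Set.ncard_coe_finset, Finset.coe_filter]

lemma setOf_isYB_RSet_w0B (n : ℕ) : {ω ∈ RSet n (w0B n) | isYB ω = true} =
    (fun x : (_ : ℕ) × Bool × List ℕ => braidWord x.1 x.2.1 ++ x.2.2) ''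
      (((Finset.Icc 1 (n - 2)).sigma fun k => Finset.univ ×ˢ
        (finite_RSet n ((braidReflection k)⁻¹ * w0B n)).toFinset :
          Finset ((_ : ℕ) × Bool × List ℕ)) : Set ((_ : ℕ) × Bool × List ℕ)) := by
  ext l
  simp only [Set.mem_image, Finset.mem_coe, Finset.mem_sigma, Finset.mem_product,
    Finset.mem_univ, true_and, Set.Finite.mem_toFinset, Finset.mem_Icc, Sigma.exists,
    Prod.exists]
  constructor
  · rintro ⟨hl, h_yb⟩
    obtain ⟨k, b, v, hk, rfl⟩ := isYB_iff.1 h_yb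
    have hkn : k + 1 < n := hl.1 (k + 1) (by cases b <;> simp [braidWord])
    exact ⟨k, b, v, ⟨⟨hk, by omega⟩,
      (braidWord_append_mem_RSet_w0B_iff hk hkn b).1 hl⟩, rfl⟩
  · rintro ⟨k, b, v, ⟨⟨hk, hkn⟩, hv⟩, rfl⟩
    exact ⟨(braidWord_append_mem_RSet_w0B_iff hk (by omega) b).2 hv,
      isYB_iff.2 ⟨k, b, v, hk, rfl⟩⟩

lemma ncard_isYB_RSet_w0B (n : ℕ) : {ω ∈ RSet n (w0B n) | isYB ω = true}.ncard =
    ∑ k ∈ Finset.Icc 1 (n - 2), 2 * Nat.card (RSet n ((braidReflection k)⁻¹ * w0B n)) := by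
  rw [setOf_isYB_RSet_w0B, Set.ncard_image_of_injective _ injective_braidWord_append,
    Set.ncard_coe_finset, Finset.card_sigma]
  refine Finset.sum_congr rfl fun k _ => ?_
  rw [Finset.card_product, Finset.card_univ, Fintype.card_bool, Nat.card_coe_set_eq,
    Set.ncard_eq_toFinset_card _ (finite_RSet n _)]

end YangBaxter

/-- For every `n ≥ 3`, with `W k = w_k ∈ Bₙ` for `1 ≤ k ≤ n - 2`,
`Σ_{ω ∈ R(w₀ᴮ)} yb(ω) = 2(n² - 2) · Σ_{k=1}^{n-2} |R(w_k)|`. -/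
theorem sum_yb_eq (n : ℕ) (hn : 3 ≤ n) (W : ℕ → Equiv.Perm ℤ)
    (hW : ∀ k, 1 ≤ k → k ≤ n - 2 → ∀ i : ℤ, W k i = wkFun n k i) :
    ∑ᶠ ω ∈ RSet n (w0B n), ybCount ω
      = 2 * (n ^ 2 - 2) * ∑ k ∈ Finset.Icc 1 (n - 2), Nat.card ↥(RSet n (W k)) := by
  have h_rot : ∀ ω ∈ RSet n (w0B n), ∀ j, ω.rotate j ∈ RSet n (w0B n) := fun _ hω =>
    rotate_mem_RSet (fun _ ha => commute_w0B_of_mem_signedPerm (sB_mem_signedPerm ha)) hω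
  have h_W : ∀ k ∈ Finset.Icc 1 (n - 2), W k = (braidReflection k)⁻¹ * w0B n := fun k hk => by
    obtain ⟨hk, hkn⟩ := Finset.mem_Icc.1 hk
    exact eq_braidReflection_inv_mul_w0B hk (by omega) (hW k hk hkn)
  calc ∑ᶠ ω ∈ RSet n (w0B n), ybCount ω
      = (n ^ 2 - 2) * {ω ∈ RSet n (w0B n) | isYB ω = true}.ncard :=
        finsum_mem_ybCount (finite_RSet n _) (fun _ => length_eq_of_mem_RSet_w0B) h_rot
    _ = (n ^ 2 - 2) * ∑ k ∈ Finset.Icc 1 (n - 2), 2 * Nat.card (RSet n (W k)) := by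
        rw [ncard_isYB_RSet_w0B]
        exact congrArg _ (Finset.sum_congr rfl fun k hk => by rw [h_W k hk])
    _ = 2 * (n ^ 2 - 2) * ∑ k ∈ Finset.Icc 1 (n - 2), Nat.card (RSet n (W k)) := by
        rw [← Finset.mul_sum]
        ring
end
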